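/- arXiv:2510.09197 — 2 statements merged into one kernel-verified Lean document; each statement's English description precedes it below -/
import Mathlib

section
/- Let G be a connected finite simple graph on n vertices, β := β(G), r_G := β^{dia(G)}/(2n), and θ_G := (β/(4n))^{dia(G)}. Then for every real θ with θ_G ≤ θ ≤ 2π − θ_G, the independence polynomial I(G,z) has no root in the open disc D(β e^{iθ}, r_G·(β·θ_G)²/4). -/
open Polynomial

open scoped Classical in
/-- `indPolyOn G A` is the independence polynomial (over `ℝ`) of the subgraph of `G`
induced on the vertex set `A`: the sum of `(-1)^|s| • X^|s|` over all independent
sets `s ⊆ A` of `G`.  Equivalently it is `∑ k (-1)^k a_k z^k` where `a_k` is the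
number of independent sets of size `k` of the induced subgraph `G[A]`. -/
noncomputable def indPolyOn {V : Type*} [Fintype V] (G : SimpleGraph V) (A : Set V) :
    Polynomial ℝ :=
  ∑ s ∈ Finset.univ.filter
      (fun s : Finset V => ↑s ⊆ A ∧ ∀ u ∈ s, ∀ v ∈ s, ¬ G.Adj u v),
    ((-1 : ℝ) ^ s.card) • (X : Polynomial ℝ) ^ s.card

/-- The independence polynomial `I(G,z)` of `G`. -/
noncomputable def indPoly {V : Type*} [Fintype V] (G : SimpleGraph V) : Polynomial ℝ :=
  indPolyOn G Set.univ

namespace IndAux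

set_option linter.unusedSectionVars false

variable {V : Type*} [Fintype V] (G : SimpleGraph V)

/-- closed neighbourhood -/
def nb (v : V) : Set V := {w | w = v ∨ G.Adj v w}

theorem indPolyOn_empty : indPolyOn G ∅ = 1 := by
  classical
  unfold indPolyOn
  have : (Finset.univ.filter
      (fun s : Finset V => (↑s : Set V) ⊆ ∅ ∧ ∀ u ∈ s, ∀ v ∈ s, ¬ G.Adj u v)) = {∅} := by
    ext s
    simp only [Finset.mem_filter, Finset.mem_univ, true_and, Finset.mem_singleton,
      Set.subset_empty_iff, Finset.coe_eq_empty]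
    constructor
    · exact fun h => h.1
    · rintro rfl; simp
  convert Finset.sum_singleton _ _ using 2
  · convert this
  · simp

theorem indPolyOn_rec (A : Set V) (v : V) (hv : v ∈ A) :
    indPolyOn G A = indPolyOn G (A \ {v}) - X * indPolyOn G (A \ nb G v) := by
  classical
  unfold indPolyOn
  rw [← Finset.sum_filter_add_sum_filter_not _ (fun s : Finset V => v ∉ s), sub_eq_add_neg]
  congr 1
  · refine Finset.sum_congr ?_ (fun _ _ => rfl)
    ext s
    simp only [Finset.mem_filter, Finset.mem_univ, true_and, Set.subset_sdiff,
      Set.disjoint_singleton_right, Finset.mem_coe]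
    tauto
  · rw [Finset.mul_sum, ← Finset.sum_neg_distrib]
    symm
    refine Finset.sum_bij' (fun s _ => insert v s) (fun s _ => s.erase v) ?_ ?_ ?_ ?_ ?_
    · intro s hs
      simp only [Finset.mem_filter, Finset.mem_univ, true_and] at hs ⊢
      obtain ⟨h1, h2⟩ := hs
      refine ⟨⟨?_, ?_⟩, by simp⟩
      · intro w hw
        simp only [Finset.coe_insert, Set.mem_insert_iff, Finset.mem_coe] at hw
        rcases hw with rfl | hw
        · exact hv
        · exact (h1 hw).1
      · intro a ha b hb hab
        simp only [Finset.mem_insert] at ha hb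
        rcases ha with rfl | ha <;> rcases hb with rfl | hb
        · exact G.irrefl hab
        · exact (h1 hb).2 (Or.inr hab)
        · exact (h1 ha).2 (Or.inr hab.symm)
        · exact h2 a ha b hb hab
    · intro s hs
      simp only [Finset.mem_filter, Finset.mem_univ, true_and, not_not] at hs ⊢
      obtain ⟨⟨h1, h2⟩, h3⟩ := hs
      refine ⟨?_, fun a ha b hb => h2 a (Finset.mem_of_mem_erase ha) b (Finset.mem_of_mem_erase hb)⟩
      intro w hw
      simp only [Finset.coe_erase, Set.mem_sdiff, Finset.mem_coe, Set.mem_singleton_iff] at hw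
      refine ⟨h1 hw.1, ?_⟩
      rintro (h | h)
      · exact hw.2 h
      · exact h2 v h3 w hw.1 h
    · intro s hs
      simp only [Finset.mem_filter, Finset.mem_univ, true_and] at hs
      apply Finset.erase_insert
      intro h
      exact (hs.1 h).2 (Or.inl rfl)
    · intro s hs
      simp only [Finset.mem_filter, Finset.mem_univ, true_and, not_not] at hs
      exact Finset.insert_erase hs.2
    · intro s hs
      simp only [Finset.mem_filter, Finset.mem_univ, true_and] at hs
      have : v ∉ s := fun h => (hs.1 h).2 (Or.inl rfl)
      rw [Finset.card_insert_of_notMem this, pow_succ, pow_succ]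
      simp only [Algebra.smul_def, map_mul, map_neg, map_one]
      ring

/-- real evaluation -/
noncomputable def p (A : Set V) (x : ℝ) : ℝ := (indPolyOn G A).eval x

/-- complex evaluation -/
noncomputable def q (A : Set V) (z : ℂ) : ℂ := aeval z (indPolyOn G A)

theorem p_empty (x : ℝ) : p G ∅ x = 1 := by simp [p, indPolyOn_empty]

theorem p_rec (A : Set V) (v : V) (hv : v ∈ A) (x : ℝ) :
    p G A x = p G (A \ {v}) x - x * p G (A \ nb G v) x := by
  simp [p, indPolyOn_rec G A v hv]

theorem q_rec (A : Set V) (v : V) (hv : v ∈ A) (z : ℂ) :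
    q G A z = q G (A \ {v}) z - z * q G (A \ nb G v) z := by
  simp [q, indPolyOn_rec G A v hv]

theorem self_mem_nb (v : V) : v ∈ nb G v := Or.inl rfl

theorem diff_nb_subset (A : Set V) (v : V) : A \ nb G v ⊆ A \ {v} := by
  intro w hw
  refine ⟨hw.1, ?_⟩
  rintro rfl
  exact hw.2 (Or.inl rfl)

theorem diff_lt (A : Set V) (v : V) (hv : v ∈ A) : A \ {v} < A :=
  Set.sdiff_singleton_ssubset.2 hv

theorem diff_nb_lt (A : Set V) (v : V) (hv : v ∈ A) : A \ nb G v < A :=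
  lt_of_le_of_lt (diff_nb_subset G A v) (diff_lt A v hv)

theorem p_ge_one (x : ℝ) (hx : x ≤ 0) (A : Set V) : 1 ≤ p G A x := by
  induction A using WellFoundedLT.induction with
  | ind A ih =>
  rcases A.eq_empty_or_nonempty with rfl | ⟨v, hv⟩
  · rw [p_empty]
  · rw [p_rec G A v hv]
    have h1 := ih _ (diff_lt A v hv)
    have h2 := ih _ (diff_nb_lt G A v hv)
    nlinarith

theorem p_zero (A : Set V) : p G A 0 = 1 := by
  induction A using WellFoundedLT.induction with
  | ind A ih =>
  rcases A.eq_empty_or_nonempty with rfl | ⟨v, hv⟩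
  · rw [p_empty]
  · rw [p_rec G A v hv, ih _ (diff_lt A v hv)]; simp

theorem p_mono (x : ℝ) (hx : 0 ≤ x) (A : Set V) (h : ∀ C ⊆ A, 0 ≤ p G C x) :
    ∀ C ⊆ A, p G A x ≤ p G C x := by
  induction A using WellFoundedLT.induction with
  | ind A ih =>
  intro C hC
  by_cases hCA : A ⊆ C
  · rw [Set.Subset.antisymm hC hCA]
  · obtain ⟨u, huA, huC⟩ := Set.not_subset.1 hCA
    have h1 := ih _ (diff_lt A u huA) (fun D hD => h D (hD.trans Set.sdiff_subset)) C
      (Set.subset_sdiff_singleton hC huC)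
    have h2 := h (A \ nb G u) Set.sdiff_subset
    rw [p_rec G A u huA]
    nlinarith

theorem p_cont (A : Set V) : Continuous (p G A) := (indPolyOn G A).continuous

theorem first_bad (R : Set V) (a b : ℝ) (ha0 : 0 ≤ a) (ha : ∀ C ⊆ R, 0 < p G C a)
    (h : ∀ y ∈ Set.Icc a b, (∀ C ⊆ R, ∀ t ∈ Set.Icc a y, 0 ≤ p G C t) → 0 < p G R y) :
    ∀ C ⊆ R, ∀ t ∈ Set.Icc a b, 0 < p G C t := by
  by_contra! hcon
  obtain ⟨C0, hC0, t0, ht0, hneg⟩ := hcon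
  set T : Set ℝ := Set.Icc a b ∩ ⋃ C : {C : Set V // C ⊆ R}, {t | p G C.1 t ≤ 0} with hT
  have hTc : IsCompact T := by
    apply isCompact_Icc.inter_right
    apply isClosed_iUnion_of_finite
    intro C
    exact isClosed_le (p_cont G _) continuous_const
  have hTn : T.Nonempty := ⟨t0, ht0, Set.mem_iUnion.2 ⟨⟨C0, hC0⟩, hneg⟩⟩
  obtain ⟨y, ⟨hy, hyT⟩, hmin⟩ := hTc.exists_isLeast hTn
  obtain ⟨⟨C1, hC1⟩, hC1y⟩ := Set.mem_iUnion.1 hyT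
  have hay : a ≠ y := by
    rintro rfl
    exact absurd hC1y (not_le.2 (ha C1 hC1))
  have hnn : ∀ C ⊆ R, ∀ t ∈ Set.Icc a y, 0 ≤ p G C t := by
    intro C hC t ht
    have hcl : IsClosed {t | 0 ≤ p G C t} := isClosed_le continuous_const (p_cont G C)
    have : closure (Set.Ico a y) ⊆ {t | 0 ≤ p G C t} := by
      apply closure_minimal _ hcl
      intro s hs
      by_contra hc
      have hc' : p G C s ≤ 0 := (not_le.1 hc).le
      have hsT : s ∈ T := ⟨⟨hs.1, hs.2.le.trans hy.2⟩,
        Set.mem_iUnion.2 ⟨⟨C, hC⟩, hc'⟩⟩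
      exact absurd (hmin hsT) (not_le.2 hs.2)
    rw [closure_Ico hay] at this
    exact this ht
  have hR := h y hy hnn
  have := p_mono G y (ha0.trans hy.1) R (fun C hC => hnn C hC y ⟨hy.1, le_rfl⟩) C1 hC1
  exact absurd hC1y (not_le.2 (hR.trans_le this))

theorem major (R : Set V) (z : ℂ) (hR : ∀ C ⊆ R, 0 < p G C ‖z‖) :
    ∀ A ⊆ R, q G A z ≠ 0 ∧ ∀ B ⊆ A,
      ‖q G B z / q G A z - 1‖ ≤ p G B ‖z‖ / p G A ‖z‖ - 1 := by
  intro A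
  induction A using WellFoundedLT.induction with
  | ind A ih =>
  intro hA
  have key : ∀ u ∈ A, q G A z ≠ 0 ∧
      ‖q G (A \ {u}) z / q G A z - 1‖ ≤ p G (A \ {u}) ‖z‖ / p G A ‖z‖ - 1 := by
    intro u hu
    have hsub : A \ {u} ⊆ R := Set.sdiff_subset.trans hA
    obtain ⟨h1, h2⟩ := ih _ (diff_lt A u hu) hsub
    have h3 := h2 _ (diff_nb_subset G A u)
    have hp1 := hR _ hA
    have hp2 := hR _ hsub
    have hrp := p_rec G A u hu ‖z‖
    have hrq := q_rec G A u hu z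
    set a := q G (A \ {u}) z
    set g := q G (A \ nb G u) z / a with hg
    have hga : q G (A \ nb G u) z = g * a := by rw [hg]; field_simp
    set a' := p G (A \ {u}) ‖z‖
    set g' := p G (A \ nb G u) ‖z‖ / a' with hg'
    have hga' : p G (A \ nb G u) ‖z‖ = g' * a' := by rw [hg']; field_simp
    have hq : q G A z = a * (1 - z * g) := by rw [hrq, hga]; ring
    have hp : p G A ‖z‖ = a' * (1 - ‖z‖ * g') := by rw [hrp, hga']; ring
    have hpos : 0 < 1 - ‖z‖ * g' := by
      rw [hp] at hp1
      exact (pos_iff_pos_of_mul_pos hp1).1 hp2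
    have hgn : ‖g‖ ≤ g' := by
      have : ‖g‖ ≤ ‖g - 1‖ + ‖(1:ℂ)‖ := by
        simpa using norm_add_le (g - 1) 1
      rw [norm_one] at this
      linarith
    have hzg : ‖z * g‖ ≤ ‖z‖ * g' := by
      rw [norm_mul]; exact mul_le_mul_of_nonneg_left hgn (norm_nonneg _)
    have hlow : 1 - ‖z‖ * g' ≤ ‖1 - z * g‖ := by
      have := norm_sub_norm_le (1:ℂ) (z * g)
      rw [norm_one] at this
      linarith
    have hne : 1 - z * g ≠ 0 := by
      intro h0
      rw [h0, norm_zero] at hlow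
      linarith
    refine ⟨by rw [hq]; exact mul_ne_zero h1 hne, ?_⟩
    have e1 : a / q G A z - 1 = (z * g) / (1 - z * g) := by
      rw [hq]; field_simp; ring
    have e2 : a' / p G A ‖z‖ - 1 = (‖z‖ * g') / (1 - ‖z‖ * g') := by
      rw [hp]
      have := hp2.ne'
      have := hpos.ne'
      field_simp; ring
    rw [e1, e2, norm_div]
    have : 0 ≤ ‖z‖ * g' := (norm_nonneg _).trans hzg
    gcongr
  refine ⟨?_, ?_⟩
  · rcases A.eq_empty_or_nonempty with rfl | ⟨v, hv⟩
    · simp [q, indPolyOn_empty]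
    · exact (key v hv).1
  · intro B hB
    by_cases hBA : A ⊆ B
    · rw [Set.Subset.antisymm hB hBA]
      by_cases h0 : q G A z = 0
      · rcases A.eq_empty_or_nonempty with rfl | ⟨v, hv⟩
        · simp [q, indPolyOn_empty] at h0
        · exact absurd h0 (key v hv).1
      · rw [div_self h0, div_self (hR _ hA).ne']; simp
    · obtain ⟨u, huA, huB⟩ := Set.not_subset.1 hBA
      obtain ⟨h1, h2⟩ := key u huA
      have hsub : A \ {u} ⊆ R := Set.sdiff_subset.trans hA
      obtain ⟨h3, h4⟩ := ih _ (diff_lt A u huA) hsub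
      have h5 := h4 B (Set.subset_sdiff_singleton hB huB)
      have hp1 := (hR _ hA).ne'
      have hp2 := (hR _ hsub).ne'
      set s := q G B z / q G (A \ {u}) z
      set t := q G (A \ {u}) z / q G A z
      set s' := p G B ‖z‖ / p G (A \ {u}) ‖z‖
      set t' := p G (A \ {u}) ‖z‖ / p G A ‖z‖
      have e1 : q G B z / q G A z = s * t := by simp only [s, t]; field_simp
      have e2 : p G B ‖z‖ / p G A ‖z‖ = s' * t' := by simp only [s', t']; field_simp
      rw [e1, e2]
      calc ‖s * t - 1‖ = ‖(s - 1) * (t - 1) + (s - 1) + (t - 1)‖ := by congr 1; ring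
        _ ≤ ‖(s - 1) * (t - 1)‖ + ‖s - 1‖ + ‖t - 1‖ := norm_add₃_le
        _ = ‖s - 1‖ * ‖t - 1‖ + ‖s - 1‖ + ‖t - 1‖ := by rw [norm_mul]
        _ ≤ (s' - 1) * (t' - 1) + (s' - 1) + (t' - 1) := by
            have := norm_nonneg (s - 1)
            have := norm_nonneg (t - 1)
            gcongr
            linarith
        _ = s' * t' - 1 := by ring

open scoped Classical in
theorem deriv_poly (A : Set V) :
    derivative (indPolyOn G A) = - ∑ u : V, if u ∈ A then indPolyOn G (A \ nb G u) else 0 := by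
  induction A using WellFoundedLT.induction with
  | ind A ih =>
  rcases A.eq_empty_or_nonempty with rfl | ⟨v, hv⟩
  · simp [indPolyOn_empty]
  · conv_lhs => rw [indPolyOn_rec G A v hv]
    rw [derivative_sub, derivative_mul, derivative_X, ih _ (diff_lt A v hv),
      ih _ (diff_nb_lt G A v hv)]
    have hsplit : ∀ u : V, (if u ∈ A then indPolyOn G (A \ nb G u) else 0) =
        (if u ∈ A \ {v} then indPolyOn G ((A \ {v}) \ nb G u) else 0)
        + (if u = v then indPolyOn G (A \ nb G v) else 0)
        - X * (if u ∈ A \ nb G v then indPolyOn G ((A \ nb G v) \ nb G u) else 0) := by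
      intro u
      by_cases huv : u = v
      · subst huv
        simp [hv, self_mem_nb]
      by_cases huA : u ∈ A
      · by_cases hadj : G.Adj v u
        · have h1 : u ∉ A \ nb G v := fun h => h.2 (Or.inr hadj)
          have h2 : (A \ {v}) \ nb G u = A \ nb G u := by
            ext w
            simp only [Set.mem_sdiff, Set.mem_singleton_iff, nb, Set.mem_ofPred_eq]
            constructor
            · tauto
            · rintro ⟨h3, h4⟩
              refine ⟨⟨h3, ?_⟩, h4⟩
              rintro rfl
              exact h4 (Or.inr hadj.symm)
          simp [huA, huv, h1, h2]
        · have h1 : u ∈ A \ nb G v := ⟨huA, by rintro (h | h); exacts [huv h, hadj h]⟩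
          have h2 : v ∈ A \ nb G u :=
            ⟨hv, by rintro (h | h); exacts [huv h.symm, hadj h.symm]⟩
          have h3 := indPolyOn_rec G (A \ nb G u) v h2
          have e1 : (A \ {v}) \ nb G u = (A \ nb G u) \ {v} := by ext w; simp; tauto
          have e2 : (A \ nb G v) \ nb G u = (A \ nb G u) \ nb G v := by ext w; simp; tauto
          rw [if_pos huA, if_pos h1, if_pos (show u ∈ A \ {v} from ⟨huA, huv⟩), if_neg huv, e1, e2,
            h3]
          ring
      · simp [huA, huv]
    rw [Finset.sum_congr rfl (fun u _ => hsplit u), Finset.sum_sub_distrib,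
      Finset.sum_add_distrib, ← Finset.mul_sum]
    simp only [Finset.sum_ite_eq', Finset.mem_univ, if_true]
    ring

open scoped Classical in
theorem p_deriv (A : Set V) (x : ℝ) :
    deriv (p G A) x = - ∑ u : V, if u ∈ A then p G (A \ nb G u) x else 0 := by
  have : deriv (p G A) x = (derivative (indPolyOn G A)).eval x := Polynomial.deriv _
  rw [this, deriv_poly, eval_neg, eval_finsetSum]
  congr 1
  refine Finset.sum_congr rfl (fun u _ => ?_)
  split_ifs <;> simp [p]

theorem p_diff (A : Set V) : Differentiable ℝ (p G A) := (indPolyOn G A).differentiable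

/-- Facts at `β`. -/
theorem beta_pos (β : ℝ) (hroot : p G Set.univ β = 0) : 0 < β := by
  by_contra h
  have := p_ge_one G β (not_lt.1 h) Set.univ
  linarith

theorem pos_below (β : ℝ) (hmin : ∀ x : ℝ, p G Set.univ x = 0 → β ≤ x) (C : Set V) (t : ℝ)
    (ht0 : 0 ≤ t) (ht : t < β) : 0 < p G C t := by
  refine first_bad G Set.univ 0 t le_rfl (fun C _ => by rw [p_zero]; exact one_pos) ?_ C
    (Set.subset_univ _) t ⟨ht0, le_rfl⟩
  intro y hy h
  refine lt_of_le_of_ne (h _ subset_rfl y ⟨hy.1, le_rfl⟩) (fun h0 => ?_)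
  have := hmin y h0.symm
  linarith [hy.2]

theorem nonneg_at (β : ℝ) (hroot : p G Set.univ β = 0)
    (hmin : ∀ x : ℝ, p G Set.univ x = 0 → β ≤ x) (C : Set V) : 0 ≤ p G C β := by
  have hb := beta_pos G β hroot
  have hcl : IsClosed {t | 0 ≤ p G C t} := isClosed_le continuous_const (p_cont G C)
  have : closure (Set.Ico 0 β) ⊆ {t | 0 ≤ p G C t} := by
    apply closure_minimal _ hcl
    intro s hs
    exact (pos_below G β hmin C s hs.1 hs.2).le
  rw [closure_Ico hb.ne] at this
  exact this ⟨hb.le, le_rfl⟩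

theorem p_mono_at (β : ℝ) (hroot : p G Set.univ β = 0)
    (hmin : ∀ x : ℝ, p G Set.univ x = 0 → β ≤ x) (A C : Set V) (h : C ⊆ A) :
    p G A β ≤ p G C β :=
  p_mono G β (beta_pos G β hroot).le A (fun D _ => nonneg_at G β hroot hmin D) C h

theorem exists_adj_boundary (hG : G.Connected) (A : Set V) (hne : A.Nonempty)
    (hA : A ≠ Set.univ) : ∃ u, u ∉ A ∧ ∃ w ∈ A, G.Adj u w := by
  by_contra! hcon
  apply hA
  obtain ⟨a, ha⟩ := hne
  ext b
  refine ⟨fun _ => trivial, fun _ => ?_⟩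
  obtain ⟨w⟩ := hG.preconnected a b
  induction w with
  | nil => exact ha
  | cons h _ ih =>
    refine ih ?_ trivial
    by_contra hc
    exact hcon _ hc _ ha h.symm

theorem pos_at (hG : G.Connected) (β : ℝ) (hroot : p G Set.univ β = 0)
    (hmin : ∀ x : ℝ, p G Set.univ x = 0 → β ≤ x) (C : Set V) (hC : C ≠ Set.univ) :
    0 < p G C β := by
  have hb := beta_pos G β hroot
  induction C using WellFoundedLT.induction with
  | ind C ih =>
  rcases C.eq_empty_or_nonempty with rfl | hne
  · rw [p_empty]; exact one_pos
  refine lt_of_le_of_ne (nonneg_at G β hroot hmin C) (fun h0 => ?_)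
  obtain ⟨u, hu, w, hw, hadj⟩ := exists_adj_boundary G hG C hne hC
  have h1 := p_rec G (insert u C) u (Set.mem_insert _ _) β
  have e1 : insert u C \ {u} = C := by
    ext x
    simp only [Set.mem_sdiff, Set.mem_insert_iff, Set.mem_singleton_iff]
    constructor
    · tauto
    · intro hx
      exact ⟨Or.inr hx, fun h => hu (h ▸ hx)⟩
  have hsub : insert u C \ nb G u ⊆ C := (diff_nb_subset G _ u).trans e1.subset
  have hlt : insert u C \ nb G u < C := by
    refine lt_of_le_of_ne hsub (fun h => ?_)
    have : w ∈ insert u C \ nb G u := h.symm.subset hw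
    exact this.2 (Or.inr hadj)
  have h2 := ih _ hlt (fun h => by
    have : u ∈ insert u C \ nb G u := h.symm.subset (Set.mem_univ u)
    exact this.2 (self_mem_nb G u))
  have h3 := nonneg_at G β hroot hmin (insert u C)
  rw [e1, ← h0] at h1
  nlinarith

theorem beta_le_one [Nonempty V] (β : ℝ) (hroot : p G Set.univ β = 0)
    (hmin : ∀ x : ℝ, p G Set.univ x = 0 → β ≤ x) : β ≤ 1 := by
  obtain ⟨v⟩ := ‹Nonempty V›
  have h := nonneg_at G β hroot hmin {v}
  rw [p_rec G {v} v rfl] at h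
  have e1 : ({v} : Set V) \ {v} = ∅ := by simp
  have e2 : ({v} : Set V) \ nb G v = ∅ := by
    apply Set.subset_empty_iff.1
    exact (diff_nb_subset G _ v).trans e1.subset
  rw [e1, e2, p_empty] at h
  linarith

theorem walk_bound (β : ℝ) (hroot : p G Set.univ β = 0)
    (hmin : ∀ x : ℝ, p G Set.univ x = 0 → β ≤ x) (hb1 : β ≤ 1) {u v : V} (w : G.Walk u v)
    (huv : u ≠ v) :
    β ^ w.length * p G ((Set.univ \ {v}) \ {u}) β ≤ p G (Set.univ \ {v}) β := by
  have hb := beta_pos G β hroot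
  induction w with
  | nil => exact absurd rfl huv
  | @cons u w v h t ih =>
    rw [SimpleGraph.Walk.length_cons]
    have hnn := nonneg_at G β hroot hmin ((Set.univ \ {v}) \ {u})
    by_cases hwv : w = v
    · subst hwv
      have h1 := p_rec G Set.univ w (Set.mem_univ w) β
      rw [hroot] at h1
      have h2 : Set.univ \ nb G w ⊆ (Set.univ \ {w}) \ {u} := by
        intro x hx
        refine ⟨diff_nb_subset G _ w hx, ?_⟩
        rintro rfl
        exact hx.2 (Or.inr h.symm)
      have h3 := p_mono_at G β hroot hmin _ _ h2
      have h4 : β ^ (t.length + 1) ≤ β := by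
        rw [pow_succ]
        exact mul_le_of_le_one_left hb.le (pow_le_one₀ hb.le hb1)
      calc _ ≤ β * p G ((Set.univ \ {w}) \ {u}) β := mul_le_mul_of_nonneg_right h4 hnn
        _ ≤ β * p G (Set.univ \ nb G w) β := mul_le_mul_of_nonneg_left h3 hb.le
        _ = _ := by linarith
    · have h0 := ih hwv
      have h1 := p_rec G (Set.univ \ {v}) w ⟨trivial, hwv⟩ β
      have h2 : (Set.univ \ {v}) \ nb G w ⊆ (Set.univ \ {v}) \ {u} := by
        intro x hx
        refine ⟨hx.1, ?_⟩
        rintro rfl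
        exact hx.2 (Or.inr h.symm)
      have h3 := p_mono_at G β hroot hmin _ _ h2
      have h4 := nonneg_at G β hroot hmin (Set.univ \ {v})
      have h5 : β * p G ((Set.univ \ {v}) \ {u}) β ≤ p G ((Set.univ \ {v}) \ {w}) β := by
        nlinarith
      calc _ = β ^ t.length * (β * p G ((Set.univ \ {v}) \ {u}) β) := by ring
        _ ≤ β ^ t.length * p G ((Set.univ \ {v}) \ {w}) β :=
            mul_le_mul_of_nonneg_left h5 (by positivity)
        _ ≤ _ := h0

theorem dist_bound (hG : G.Connected) (β : ℝ) (hroot : p G Set.univ β = 0)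
    (hmin : ∀ x : ℝ, p G Set.univ x = 0 → β ≤ x) (hb1 : β ≤ 1) (u v : V) (huv : u ≠ v) :
    β ^ (G.diam + 1) * p G ((Set.univ \ {v}) \ nb G u) β ≤ p G (Set.univ \ {v}) β := by
  have hb := beta_pos G β hroot
  have : Nonempty V := ⟨u⟩
  obtain ⟨w, hw⟩ := hG.exists_walk_length_eq_dist u v
  have h1 := walk_bound G β hroot hmin hb1 w huv
  have hd : w.length ≤ G.diam := by
    rw [hw]
    exact SimpleGraph.dist_le_diam (SimpleGraph.connected_iff_ediam_ne_top.1 hG)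
  have h2 := p_rec G (Set.univ \ {v}) u ⟨trivial, huv⟩ β
  have h4 := nonneg_at G β hroot hmin (Set.univ \ {v})
  have h5 := nonneg_at G β hroot hmin ((Set.univ \ {v}) \ {u})
  calc _ = β ^ G.diam * (β * p G ((Set.univ \ {v}) \ nb G u) β) := by ring
    _ ≤ β ^ G.diam * p G ((Set.univ \ {v}) \ {u}) β := by
        apply mul_le_mul_of_nonneg_left _ (by positivity)
        linarith
    _ ≤ β ^ w.length * p G ((Set.univ \ {v}) \ {u}) β :=
        mul_le_mul_of_nonneg_right (pow_le_pow_of_le_one hb.le hb1 hd) h5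
    _ ≤ _ := h1

/-- all `p C`, `C ⊆ R`, decrease on an interval on which they are nonnegative -/
theorem p_anti (R : Set V) (a y : ℝ) (h : ∀ C ⊆ R, ∀ t ∈ Set.Icc a y, 0 ≤ p G C t)
    (C : Set V) (hC : C ⊆ R) (t : ℝ) (ht : t ∈ Set.Icc a y) : p G C t ≤ p G C a := by
  classical
  have : AntitoneOn (p G C) (Set.Icc a y) := by
    apply antitoneOn_of_deriv_nonpos (convex_Icc a y) (p_cont G C).continuousOn
      (p_diff G C).differentiableOn
    intro x hx
    rw [interior_Icc] at hx
    rw [p_deriv]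
    refine neg_nonpos.2 (Finset.sum_nonneg (fun u _ => ?_))
    split_ifs
    · exact h _ (Set.sdiff_subset.trans hC) x ⟨hx.1.le, hx.2.le⟩
    · exact le_rfl
  exact this ⟨le_rfl, ht.1.trans ht.2⟩ ht ht.1

/-- Lower bound for `p R` from bounds on the neighbours deleted. -/
theorem p_lower (A : Set V) (a y K : ℝ) (hay : a ≤ y) (hK : 0 ≤ K)
    (h : ∀ u ∈ A, ∀ t ∈ Set.Icc a y, p G (A \ nb G u) t ≤ K) :
    p G A a - Fintype.card V * K * (y - a) ≤ p G A y := by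
  classical
  have := (convex_Icc a y).mul_sub_le_image_sub_of_le_deriv (f := p G A)
    (p_cont G A).continuousOn (p_diff G A).differentiableOn (C := - (Fintype.card V * K)) (by
      intro x hx
      rw [interior_Icc] at hx
      rw [p_deriv]
      apply neg_le_neg
      calc _ ≤ ∑ u : V, K := by
            apply Finset.sum_le_sum
            intro u _
            split_ifs with hu
            · exact h u hu x ⟨hx.1.le, hx.2.le⟩
            · exact hK
        _ = _ := by simp) a ⟨le_rfl, hay⟩ y ⟨hay, le_rfl⟩ hay
  linarith

theorem beyond (hG : G.Connected) (β : ℝ) (hroot : p G Set.univ β = 0)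
    (hmin : ∀ x : ℝ, p G Set.univ x = 0 → β ≤ x) (hb1 : β ≤ 1) (v : V) (b ε : ℝ) (hε : ε < 1)
    (hbβ : β ≤ b) (hδ : Fintype.card V * (b - β) ≤ ε * β ^ (G.diam + 1)) :
    (∀ C ⊆ Set.univ \ {v}, ∀ t ∈ Set.Icc β b, 0 < p G C t) ∧
    (1 - ε) * p G (Set.univ \ {v}) β ≤ p G (Set.univ \ {v}) b ∧
    - (ε * p G (Set.univ \ {v}) β) ≤ p G Set.univ b := by
  have hb := beta_pos G β hroot
  set H : Set V := Set.univ \ {v} with hH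
  have hHne : ∀ C ⊆ H, C ≠ Set.univ := by
    rintro C hC rfl
    exact (hC (Set.mem_univ v)).2 rfl
  have hpH := pos_at G hG β hroot hmin H (hHne H subset_rfl)
  set K := p G H β / β ^ (G.diam + 1) with hK
  have hpw : 0 < β ^ (G.diam + 1) := by positivity
  have hKpos : 0 < K := by positivity
  have hKb : ∀ u ∈ H, p G (H \ nb G u) β ≤ K := by
    intro u hu
    rw [hK, le_div_iff₀ hpw, mul_comm]
    exact dist_bound G hG β hroot hmin hb1 u v hu.2
  have hKe : ∀ y ∈ Set.Icc β b, Fintype.card V * K * (y - β) ≤ ε * p G H β := by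
    intro y hy
    calc Fintype.card V * K * (y - β) ≤ Fintype.card V * K * (b - β) := by
          apply mul_le_mul_of_nonneg_left _ (by positivity)
          linarith [hy.2]
      _ = (Fintype.card V * (b - β)) * K := by ring
      _ ≤ (ε * β ^ (G.diam + 1)) * K := mul_le_mul_of_nonneg_right hδ hKpos.le
      _ = ε * p G H β := by rw [hK]; field_simp
  have hlow : ∀ y ∈ Set.Icc β b, (∀ C ⊆ H, ∀ t ∈ Set.Icc β y, 0 ≤ p G C t) →
      (1 - ε) * p G H β ≤ p G H y := by
    intro y hy h
    have := p_lower G H β y K hy.1 hKpos.le (fun u hu t ht =>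
      (p_anti G H β y h _ Set.sdiff_subset t ht).trans (hKb u hu))
    linarith [hKe y hy]
  have hpos : ∀ C ⊆ H, ∀ t ∈ Set.Icc β b, 0 < p G C t := by
    apply first_bad G H β b hb.le (fun C hC => pos_at G hG β hroot hmin C (hHne C hC))
    intro y hy h
    have := hlow y hy h
    have : 0 < (1 - ε) * p G H β := mul_pos (by linarith) hpH
    linarith
  have hnn : ∀ C ⊆ H, ∀ t ∈ Set.Icc β b, 0 ≤ p G C t := fun C hC t ht => (hpos C hC t ht).le
  refine ⟨hpos, hlow b ⟨hbβ, le_rfl⟩ hnn, ?_⟩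
  have := p_lower G Set.univ β b K hbβ hKpos.le (by
    intro u _ t ht
    by_cases huv : u = v
    · subst huv
      have hs : Set.univ \ nb G u ⊆ H := diff_nb_subset G _ u
      refine (p_anti G H β b hnn _ hs t ht).trans ?_
      have h1 := p_rec G Set.univ u (Set.mem_univ u) β
      rw [hroot] at h1
      have h2 := nonneg_at G β hroot hmin (Set.univ \ nb G u)
      rw [hK, le_div_iff₀ hpw]
      have h3 : β ^ (G.diam + 1) ≤ β := by
        rw [pow_succ]
        exact mul_le_of_le_one_left hb.le (pow_le_one₀ hb.le hb1)
      nlinarith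
    · have hle : p G (Set.univ \ nb G u) t ≤ p G (H \ nb G u) t := by
        have e : H \ nb G u = (Set.univ \ nb G u) \ {v} := by
          ext x; simp [hH]; tauto
        by_cases hv : v ∈ Set.univ \ nb G u
        · rw [p_rec G _ v hv t, e]
          have : 0 ≤ p G ((Set.univ \ nb G u) \ nb G v) t := by
            apply hnn _ _ t ht
            intro x hx
            exact ⟨trivial, fun h => hx.2 (Or.inl h)⟩
          have : 0 ≤ t := hb.le.trans ht.1
          nlinarith
        · rw [e, Set.sdiff_singleton_eq_self hv]
      exact hle.trans ((p_anti G H β b hnn _ Set.sdiff_subset t ht).trans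
        (hKb u ⟨trivial, huv⟩)))
  rw [hroot] at this
  linarith [hKe b ⟨hbβ, le_rfl⟩]

/-- A root forces `|z| - Re z` to be small. -/
theorem root_ineq (v : V) (z : ℂ) (hR : ∀ C ⊆ Set.univ \ {v}, 0 < p G C ‖z‖)
    (hz : q G Set.univ z = 0) :
    ‖z‖ - z.re ≤ - p G Set.univ ‖z‖ / p G (Set.univ \ {v}) ‖z‖ := by
  obtain ⟨h1, h2⟩ := major G (Set.univ \ {v}) z hR _ subset_rfl
  have h3 := h2 _ (diff_nb_subset G Set.univ v)
  have hq := q_rec G Set.univ v (Set.mem_univ v) z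
  have hp := p_rec G Set.univ v (Set.mem_univ v) ‖z‖
  have hpos := hR _ subset_rfl
  set a := q G (Set.univ \ {v}) z
  set a' := p G (Set.univ \ {v}) ‖z‖
  set g := q G (Set.univ \ nb G v) z / a with hg
  set g' := p G (Set.univ \ nb G v) ‖z‖ / a' with hg'
  have hga : q G (Set.univ \ nb G v) z = g * a := by rw [hg]; field_simp
  have hga' : p G (Set.univ \ nb G v) ‖z‖ = g' * a' := by rw [hg']; field_simp
  have hzg : z * g = 1 := by
    rw [hz, hga] at hq
    have : a * (1 - z * g) = 0 := by rw [hq]; ring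
    rcases mul_eq_zero.1 this with h | h
    · exact absurd h h1
    · exact (sub_eq_zero.1 h).symm
  have e : - p G Set.univ ‖z‖ / a' = ‖z‖ * g' - 1 := by
    rw [hp, hga']
    field_simp
    ring
  rw [e]
  have h4 : (z * (g - 1)).re ≤ ‖z‖ * (g' - 1) := by
    refine (Complex.re_le_norm _).trans ?_
    rw [norm_mul]
    exact mul_le_mul_of_nonneg_left h3 (norm_nonneg _)
  have h5 : (z * (g - 1)).re = 1 - z.re := by
    rw [mul_sub, hzg]; simp
  linarith

theorem cos_ineq (t θ : ℝ) (ht0 : 0 < t) (ht1 : t ≤ 1) (h1 : t ≤ θ)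
    (h2 : θ ≤ 2 * Real.pi - t) : Real.cos θ ≤ 1 - t ^ 2 * (2 / 5) := by
  have hc : Real.cos θ ≤ Real.cos t := by
    by_cases hθ : θ ≤ Real.pi
    · exact Real.cos_le_cos_of_nonneg_of_le_pi ht0.le hθ h1
    · rw [← Real.cos_two_pi_sub θ]
      exact Real.cos_le_cos_of_nonneg_of_le_pi ht0.le (by linarith) (by linarith)
  have hb := Real.cos_bound (x := t) (by rw [abs_of_pos ht0]; exact ht1)
  rw [abs_of_pos ht0] at hb
  have := (abs_le.1 hb).2
  have h4 : t ^ 4 ≤ t ^ 2 := pow_le_pow_of_le_one ht0.le ht1 (by norm_num)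
  nlinarith [sq_nonneg t]

end IndAux

/-- Let `G` be connected on `n` vertices, `β := β(G)`,
`r_G := β^{dia(G)}/(2n)` and `θ_G := (β/(4n))^{dia(G)}`.  For every
`θ ∈ [θ_G, 2π − θ_G]`, the independence polynomial has no root in the open disc
`D(β e^{iθ}, r_G (β θ_G)² / 4)`. -/
theorem no_root_in_disc_away_from_beta {V : Type*} [Fintype V]
    (G : SimpleGraph V) (hG : G.Connected)
    (β : ℝ) (hroot : (indPoly G).eval β = 0)
    (hmin : ∀ x : ℝ, (indPoly G).eval x = 0 → β ≤ x)
    (rG θG : ℝ) (hrG : rG = β ^ G.diam / (2 * Fintype.card V))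
    (hθG : θG = (β / (4 * Fintype.card V)) ^ G.diam) :
    ∀ θ : ℝ, θG ≤ θ → θ ≤ 2 * Real.pi - θG →
      ∀ z ∈ Metric.ball ((β : ℂ) * Complex.exp (θ * Complex.I)) (rG * (β * θG) ^ 2 / 4),
        aeval z (indPoly G) ≠ 0 := by
  intro θ hθ1 hθ2 z hz hz0
  have : Nonempty V := hG.nonempty
  obtain ⟨v⟩ := hG.nonempty
  have hroot' : IndAux.p G Set.univ β = 0 := hroot
  have hmin' : ∀ x : ℝ, IndAux.p G Set.univ x = 0 → β ≤ x := hmin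
  have hb := IndAux.beta_pos G β hroot'
  have hb1 := IndAux.beta_le_one G β hroot' hmin'
  have hn : (1 : ℝ) ≤ Fintype.card V := by exact_mod_cast Fintype.card_pos
  have hθ0 : 0 < θG := by rw [hθG]; positivity
  have hθle : θG ≤ 1 := by
    rw [hθG]
    apply pow_le_one₀ (by positivity)
    rw [div_le_one (by positivity)]
    linarith
  have hcos := IndAux.cos_ineq θG θ hθ0 hθle hθ1 hθ2
  set δ := rG * (β * θG) ^ 2 / 4 with hδ
  have hδe : Fintype.card V * δ = (β * θG ^ 2 / 8) * β ^ (G.diam + 1) := by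
    rw [hδ, hrG]; field_simp; ring
  set ε := β * θG ^ 2 / 8 with hε
  have hθsq : θG ^ 2 ≤ 1 := pow_le_one₀ hθ0.le hθle
  have hε0 : 0 < ε := by positivity
  have hε1 : ε ≤ 1 / 8 := by rw [hε]; nlinarith
  have hδ0 : 0 < δ := by rw [hδ, hrG]; positivity
  have hδle : δ ≤ ε := by
    have h1 : δ ≤ Fintype.card V * δ := le_mul_of_one_le_left hδ0.le hn
    have h2 : ε * β ^ (G.diam + 1) ≤ ε :=
      mul_le_of_le_one_right hε0.le (pow_le_one₀ hb.le hb1)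
    linarith
  rw [Metric.mem_ball, Complex.dist_eq] at hz
  set c := (β : ℂ) * Complex.exp (θ * Complex.I) with hc
  have hcn : ‖c‖ = β := by
    rw [hc, norm_mul, Complex.norm_exp_ofReal_mul_I, Complex.norm_real, mul_one,
      Real.norm_of_nonneg hb.le]
  have hcre : c.re = β * Real.cos θ := by
    rw [hc, Complex.re_ofReal_mul, Complex.exp_ofReal_mul_I_re]
  have hre : z.re - c.re < δ := by
    have := Complex.re_le_norm (z - c)
    rw [Complex.sub_re] at this
    linarith
  have hnz : ‖z‖ < β + δ := by
    have : ‖z‖ ≤ ‖z - c‖ + ‖c‖ := by simpa using norm_add_le (z - c) c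
    linarith
  have hq0 : IndAux.q G Set.univ z = 0 := hz0
  rcases lt_or_ge ‖z‖ β with hlt | hge
  · have hpos : ∀ C : Set V, 0 < IndAux.p G C ‖z‖ := fun C =>
      IndAux.pos_below G β hmin' C ‖z‖ (norm_nonneg z) hlt
    have h1 := IndAux.root_ineq G v z (fun C _ => hpos C) hq0
    have h2 : 0 < IndAux.p G Set.univ ‖z‖ / IndAux.p G (Set.univ \ {v}) ‖z‖ :=
      div_pos (hpos _) (hpos _)
    rw [neg_div] at h1
    linarith [Complex.re_le_norm z]
  · obtain ⟨h1, h2, h3⟩ := IndAux.beyond G hG β hroot' hmin' hb1 v ‖z‖ ε (by linarith) hge (by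
      rw [← hδe]
      apply mul_le_mul_of_nonneg_left _ (by positivity)
      linarith)
    have hpos : ∀ C ⊆ Set.univ \ {v}, 0 < IndAux.p G C ‖z‖ := fun C hC =>
      h1 C hC ‖z‖ ⟨hge, le_rfl⟩
    have h4 := IndAux.root_ineq G v z hpos hq0
    have h5 := hpos _ subset_rfl
    have h6 := h1 _ subset_rfl β ⟨le_rfl, hge⟩
    have h7 : - IndAux.p G Set.univ ‖z‖ / IndAux.p G (Set.univ \ {v}) ‖z‖ ≤ 8 / 7 * ε := by
      rw [div_le_iff₀ h5]
      have h8 : 7 / 8 * IndAux.p G (Set.univ \ {v}) β ≤ IndAux.p G (Set.univ \ {v}) ‖z‖ := by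
        nlinarith
      nlinarith
    have h9 : β * Real.cos θ ≤ β - β * θG ^ 2 * (2 / 5) := by nlinarith
    have h10 : β * θG ^ 2 = 8 * ε := by rw [hε]; ring
    linarith
end

section
/- Let G be a connected finite simple graph on n vertices, v a vertex of G, and β := β(G). Then f_v'(β) ≤ n/β^{dia(G)}; equivalently, −I'(G, β) ≤ n·I(G∖v, β)/β^{dia(G)}. -/
open Polynomial

open scoped Classical in
noncomputable def indFam {V : Type*} [Fintype V] (G : SimpleGraph V) (A : Set V) :
    Finset (Finset V) :=
  Finset.univ.filter
      (fun s : Finset V => ↑s ⊆ A ∧ ∀ u ∈ s, ∀ v ∈ s, ¬ G.Adj u v)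

theorem mem_indFam {V : Type*} [Fintype V] {G : SimpleGraph V} {A : Set V} {s : Finset V} :
    s ∈ indFam G A ↔ (↑s ⊆ A ∧ ∀ u ∈ s, ∀ v ∈ s, ¬ G.Adj u v) := by
  simp [indFam]

theorem indPolyOn_eq {V : Type*} [Fintype V] (G : SimpleGraph V) (A : Set V) :
    indPolyOn G A = ∑ s ∈ indFam G A, ((-1 : ℝ) ^ s.card) • (X : Polynomial ℝ) ^ s.card := rfl

open scoped Classical in
theorem sum_indFam_mem {V : Type*} [Fintype V] (G : SimpleGraph V) (A : Set V) (u : V)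
    (hu : u ∈ A) {M : Type*} [AddCommMonoid M] (g : ℕ → M) :
    ∑ s ∈ (indFam G A).filter (fun s => u ∈ s), g s.card =
      ∑ t ∈ indFam G (A \ insert u (G.neighborSet u)), g (t.card + 1) := by
  symm
  refine Finset.sum_bij (fun t _ => insert u t) ?_ ?_ ?_ ?_
  · intro t ht
    rw [mem_indFam] at ht
    simp only [Finset.mem_filter, mem_indFam, Finset.mem_insert, true_or, and_true]
    refine ⟨?_, ?_⟩
    · intro x hx
      simp only [Finset.coe_insert, Set.mem_insert_iff] at hx
      rcases hx with rfl | hx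
      · exact hu
      · exact (ht.1 hx).1
    · have key : ∀ x ∈ t, ¬ G.Adj u x := fun x hx h => (ht.1 hx).2 (Or.inr h)
      rintro x (rfl | hx) y (rfl | hy)
      · exact G.loopless.irrefl _
      · exact key y hy
      · exact fun h => key x hx h.symm
      · exact ht.2 x hx y hy
  · intro s hs t ht h
    have h1 : u ∉ s := fun h => ((mem_indFam.1 hs).1 h).2 (Or.inl rfl)
    have h2 : u ∉ t := fun h => ((mem_indFam.1 ht).1 h).2 (Or.inl rfl)
    rw [← Finset.erase_insert h1, ← Finset.erase_insert h2]
    exact congrArg (fun s => s.erase u) h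
  · intro s hs
    simp only [Finset.mem_filter, mem_indFam] at hs
    obtain ⟨⟨h1, h2⟩, h3⟩ := hs
    refine ⟨s.erase u, ?_, Finset.insert_erase h3⟩
    rw [mem_indFam]
    refine ⟨?_, fun x hx y hy => h2 x (Finset.mem_of_mem_erase hx) y (Finset.mem_of_mem_erase hy)⟩
    intro x hx
    have hx' := Finset.mem_erase.1 (Finset.mem_coe.1 hx)
    refine ⟨h1 hx'.2, ?_⟩
    rintro (h | h)
    · exact hx'.1 h
    · exact h2 u h3 x hx'.2 h
  · intro t ht
    have h2 : u ∉ t := fun h => ((mem_indFam.1 ht).1 h).2 (Or.inl rfl)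
    rw [Finset.card_insert_of_notMem h2]

open scoped Classical in
theorem indPolyOn_rec {V : Type*} [Fintype V] (G : SimpleGraph V) (A : Set V) (u : V)
    (hu : u ∈ A) :
    indPolyOn G A = indPolyOn G (A \ {u}) -
      X * indPolyOn G (A \ insert u (G.neighborSet u)) := by
  rw [indPolyOn_eq G A, ← Finset.sum_filter_add_sum_filter_not _ (fun s => u ∈ s),
    sum_indFam_mem G A u hu (fun k => ((-1 : ℝ) ^ k) • (X : Polynomial ℝ) ^ k)]
  have : (indFam G A).filter (fun s => ¬ u ∈ s) = indFam G (A \ {u}) := by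
    ext s
    simp only [Finset.mem_filter, mem_indFam]
    constructor
    · rintro ⟨⟨h1, h2⟩, h3⟩
      refine ⟨fun x hx => ⟨h1 hx, ?_⟩, h2⟩
      rintro rfl
      exact h3 hx
    · rintro ⟨h1, h2⟩
      exact ⟨⟨fun x hx => (h1 hx).1, h2⟩, fun h => (h1 h).2 rfl⟩
  rw [this, indPolyOn_eq, indPolyOn_eq, Finset.mul_sum, add_comm, sub_eq_add_neg,
    ← Finset.sum_neg_distrib]
  congr 1
  refine Finset.sum_congr rfl fun t _ => ?_
  simp only [Polynomial.smul_eq_C_mul, pow_succ, map_mul, map_neg, map_one, map_pow]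
  ring

open scoped Classical in
theorem indPoly_derivative {V : Type*} [Fintype V] (G : SimpleGraph V) :
    derivative (indPoly G) =
      - ∑ u : V, indPolyOn G (Set.univ \ insert u (G.neighborSet u)) := by
  have h1 : ∀ u : V, indPolyOn G (Set.univ \ insert u (G.neighborSet u)) =
      - ∑ s ∈ indFam G Set.univ, if u ∈ s then
        ((-1 : ℝ) ^ s.card) • (X : Polynomial ℝ) ^ (s.card - 1) else 0 := by
    intro u
    rw [← Finset.sum_filter, sum_indFam_mem G Set.univ u (Set.mem_univ _)
      (fun k => ((-1 : ℝ) ^ k) • (X : Polynomial ℝ) ^ (k - 1)), indPolyOn_eq,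
      ← Finset.sum_neg_distrib]
    refine Finset.sum_congr rfl fun t _ => ?_
    simp [Polynomial.smul_eq_C_mul, pow_succ]
  simp_rw [h1]
  rw [Finset.sum_neg_distrib, neg_neg, Finset.sum_comm, indPoly, indPolyOn_eq, derivative_sum]
  refine Finset.sum_congr rfl fun s _ => ?_
  rw [← Finset.sum_filter]
  rw [derivative_smul, derivative_X_pow, Finset.sum_const, Finset.filter_mem_eq_inter,
    Finset.univ_inter, nsmul_eq_mul, smul_eq_C_mul, smul_eq_C_mul, ← C_eq_natCast]
  ring

theorem indPolyOn_one_le {V : Type*} [Fintype V] (G : SimpleGraph V) (A : Set V) (z : ℝ)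
    (hz : z ≤ 0) : 1 ≤ (indPolyOn G A).eval z := by
  rw [indPolyOn_eq, eval_finsetSum]
  have h0 : (∅ : Finset V) ∈ indFam G A := by simp [mem_indFam]
  have : ∀ s ∈ indFam G A,
      0 ≤ eval z (((-1 : ℝ) ^ s.card) • (X : Polynomial ℝ) ^ s.card) := by
    intro s _
    simp only [eval_smul, eval_pow, eval_X, smul_eq_mul, ← mul_pow]
    exact pow_nonneg (by linarith) _
  refine le_trans ?_ (Finset.single_le_sum this h0)
  simp

theorem indPolyOn_empty {V : Type*} [Fintype V] (G : SimpleGraph V) :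
    indPolyOn G ∅ = 1 := by
  have : indFam G ∅ = {∅} := by
    ext s
    rw [mem_indFam, Finset.mem_singleton, Set.subset_empty_iff, Finset.coe_eq_empty]
    constructor
    · exact fun h => h.1
    · rintro rfl
      simp
  rw [indPolyOn_eq, this]
  simp

theorem ind_eval_rec {V : Type*} [Fintype V] (G : SimpleGraph V) (A : Set V) (u : V)
    (hu : u ∈ A) (z : ℝ) :
    (indPolyOn G A).eval z = (indPolyOn G (A \ {u})).eval z -
      z * (indPolyOn G (A \ insert u (G.neighborSet u))).eval z := by
  conv_lhs => rw [indPolyOn_rec G A u hu]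
  simp

/-- monotonicity -/
theorem ind_mono {V : Type*} [Fintype V] (G : SimpleGraph V) (z : ℝ) (hz : 0 ≤ z)
    (hpos : ∀ A, 0 ≤ (indPolyOn G A).eval z) (A B : Set V) (h : A ⊆ B) :
    (indPolyOn G B).eval z ≤ (indPolyOn G A).eval z := by
  have key : ∀ C : Set V, (indPolyOn G (A ∪ C)).eval z ≤ (indPolyOn G A).eval z := by
    intro C
    induction C, Set.toFinite C using Set.Finite.induction_on with
    | empty => simp
    | @insert u C _ _ ih =>
      rw [Set.union_insert]
      by_cases hu : u ∈ A ∪ C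
      · rwa [Set.insert_eq_of_mem hu]
      · rw [ind_eval_rec G _ u (Set.mem_insert _ _)]
        have e : insert u (A ∪ C) \ {u} = A ∪ C := by
          simp [Set.sdiff_singleton_eq_self hu]
        rw [e]
        have := mul_nonneg hz (hpos (insert u (A ∪ C) \ insert u (G.neighborSet u)))
        linarith
  have := key B
  rwa [Set.union_eq_self_of_subset_left h] at this

theorem ind_nonneg {V : Type*} [Fintype V] (G : SimpleGraph V)
    (β : ℝ) (hroot : (indPoly G).eval β = 0)
    (hmin : ∀ x : ℝ, (indPoly G).eval x = 0 → β ≤ x) :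
    0 < β ∧ ∀ A, 0 ≤ (indPolyOn G A).eval β := by
  have hβ : 0 < β := by
    by_contra h
    have := indPolyOn_one_le G Set.univ β (not_lt.1 h)
    rw [indPoly] at hroot
    linarith
  refine ⟨hβ, ?_⟩
  let S : Set ℝ := Set.Icc 0 β ∩ ⋃ A : Set V, {z | (indPolyOn G A).eval z = 0}
  have hS : IsCompact S := by
    refine isCompact_Icc.inter_right ?_
    refine isClosed_iUnion_of_finite fun A => ?_
    exact isClosed_eq (indPolyOn G A).continuous continuous_const
  have hne : S.Nonempty := ⟨β, ⟨hβ.le, le_rfl⟩, Set.mem_iUnion.2 ⟨Set.univ, hroot⟩⟩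
  obtain ⟨z, ⟨⟨hz0, hzβ⟩, hzA⟩, hzmin⟩ := hS.exists_isLeast hne
  obtain ⟨A, hA⟩ := Set.mem_iUnion.1 hzA
  have hpos : ∀ B, 0 ≤ (indPolyOn G B).eval z := by
    intro B
    by_contra hB
    push Not at hB
    have hc : ContinuousOn (fun x => (indPolyOn G B).eval x) (Set.Icc 0 z) :=
      (indPolyOn G B).continuous.continuousOn
    have h0 := indPolyOn_one_le G B 0 le_rfl
    obtain ⟨y, hy, hy0⟩ := intermediate_value_Icc' hz0 hc ⟨hB.le, by linarith⟩
    have : z ≤ y := hzmin ⟨⟨hy.1, hy.2.trans hzβ⟩, Set.mem_iUnion.2 ⟨B, hy0⟩⟩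
    have : y = z := le_antisymm hy.2 this
    subst this
    simp only at hy0
    linarith
  have h1 := ind_mono G z hz0 hpos A Set.univ (Set.subset_univ _)
  have h2 : (indPolyOn G A).eval z = 0 := hA
  have h3 := hmin z (le_antisymm (by rw [indPoly]; linarith) (hpos _))
  have : z = β := le_antisymm hzβ h3
  rwa [this] at hpos

/-- strict positivity on proper subsets -/
theorem ind_pos {V : Type*} [Fintype V] (G : SimpleGraph V) (hG : G.Connected)
    (β : ℝ) (hβ : 0 < β) (hpos : ∀ A, 0 ≤ (indPolyOn G A).eval β) (B : Set V)
    (hB : (indPolyOn G B).eval β = 0) : B = Set.univ := by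
  obtain ⟨A, hAB, hA⟩ := exists_minimal_le_of_wellFoundedLT
    (fun A : Set V => (indPolyOn G A).eval β = 0) B hB
  suffices h : A = Set.univ by
    subst h
    exact Set.univ_subset_iff.1 hAB
  by_contra hne
  have hAne : A.Nonempty := by
    rw [Set.nonempty_iff_ne_empty]
    rintro rfl
    have := hA.1
    simp [indPolyOn_empty] at this
  obtain ⟨a, ha⟩ := hAne
  obtain ⟨b, hb⟩ := (Set.ne_univ_iff_exists_notMem A).1 hne
  obtain ⟨p⟩ := hG.preconnected a b
  obtain ⟨d, _, hd1, hd2⟩ := p.exists_boundary_dart A ha hb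
  have hadj := d.adj
  have h1 := ind_eval_rec G (insert d.snd A) d.snd (Set.mem_insert _ _) β
  have e : insert d.snd A \ {d.snd} = A := by
    simp [Set.sdiff_singleton_eq_self hd2]
  rw [e, hA.1] at h1
  have h2 := hpos (insert d.snd A)
  have h3 := hpos (insert d.snd A \ insert d.snd (G.neighborSet d.snd))
  have h4 : (indPolyOn G (insert d.snd A \ insert d.snd (G.neighborSet d.snd))).eval β = 0 := by
    nlinarith
  have h5 : insert d.snd A \ insert d.snd (G.neighborSet d.snd) ≤ A := by
    rintro x ⟨hx | hx, hx2⟩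
    · exact absurd (Or.inl hx) hx2
    · exact hx
  exact (hA.2 h4 h5 hd1).2 (Or.inr hadj.symm)

open scoped Classical in
theorem ind_superadd {V : Type*} [Fintype V] (G : SimpleGraph V)
    (β : ℝ) (hroot : (indPoly G).eval β = 0) (hβ : 0 < β)
    (hpos : ∀ A, 0 ≤ (indPolyOn G A).eval β) (S : Finset V) :
    ∑ u ∈ S, (indPolyOn G (Set.univ \ {u})).eval β ≤
      (indPolyOn G (Set.univ \ (S : Set V))).eval β := by
  induction S using Finset.induction_on with
  | empty => simp; exact hpos _
  | @insert u S hu ih =>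
    rw [Finset.sum_insert hu]
    have h1 := ind_eval_rec G Set.univ u (Set.mem_univ _) β
    have h2 := ind_eval_rec G (Set.univ \ (S : Set V)) u ⟨Set.mem_univ _, hu⟩ β
    have h3 := ind_mono G β hβ.le hpos
      ((Set.univ \ (S : Set V)) \ insert u (G.neighborSet u))
      (Set.univ \ insert u (G.neighborSet u)) (Set.sdiff_subset_sdiff_left Set.sdiff_subset)
    have e : (Set.univ \ (S : Set V)) \ {u} = Set.univ \ ((insert u S : Finset V) : Set V) := by
      ext x
      simp
      tauto
    rw [indPoly] at hroot
    rw [e] at h2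
    have := mul_le_mul_of_nonneg_left h3 hβ.le
    linarith

theorem ind_card {V : Type*} [Fintype V] (G : SimpleGraph V)
    (β : ℝ) (hroot : (indPoly G).eval β = 0) (hβ : 0 < β)
    (hpos : ∀ A, 0 ≤ (indPolyOn G A).eval β) : 1 ≤ (Fintype.card V : ℝ) * β := by
  classical
  have key : ∀ S : Finset V, 1 - S.card * β ≤ (indPolyOn G (S : Set V)).eval β := by
    intro S
    induction S using Finset.induction_on with
    | empty => simp [indPolyOn_empty]
    | @insert u S hu ih =>
      rw [Finset.coe_insert, ind_eval_rec G _ u (Set.mem_insert _ _),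
        Finset.card_insert_of_notMem hu]
      have e : insert u (S : Set V) \ {u} = S := by
        ext y
        simp only [Set.mem_sdiff, Set.mem_insert_iff, Finset.mem_coe, Set.mem_singleton_iff]
        constructor
        · rintro ⟨h | h, h2⟩
          · exact absurd h h2
          · exact h
        · exact fun h => ⟨Or.inr h, fun h2 => hu (h2 ▸ h)⟩
      rw [e]
      have h := ind_mono G β hβ.le hpos ∅
        (insert u (S : Set V) \ insert u (G.neighborSet u)) (Set.empty_subset _)
      rw [indPolyOn_empty, eval_one] at h
      have := mul_le_mul_of_nonneg_left h hβ.le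
      push_cast
      linarith
  have := key Finset.univ
  rw [indPoly] at hroot
  rw [Finset.coe_univ, hroot, Finset.card_univ] at this
  linarith

open scoped Classical in
theorem sum_biUnion_le_aux {V : Type*} (s : Finset V) (t : V → Finset V) (x : V → ℝ)
    (hx : ∀ u, 0 ≤ x u) : ∑ u ∈ s.biUnion t, x u ≤ ∑ y ∈ s, ∑ u ∈ t y, x u := by
  induction s using Finset.induction_on with
  | empty => simp
  | @insert a s ha ih =>
    rw [Finset.biUnion_insert, Finset.sum_insert ha]
    have h1 := Finset.sum_union_inter (s₁ := t a) (s₂ := s.biUnion t) (f := x)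
    have h2 : 0 ≤ ∑ u ∈ t a ∩ s.biUnion t, x u := Finset.sum_nonneg fun u _ => hx u
    linarith

open scoped Classical in
theorem ball_sum {V : Type*} [Fintype V] (G : SimpleGraph V) (hG : G.Connected)
    (β : ℝ) (hβ : 0 < β) (x : V → ℝ) (hx : ∀ u, 0 ≤ x u)
    (h : ∀ w, β * ∑ y ∈ Finset.univ.filter (fun y => y = w ∨ G.Adj w y), x y ≤ x w)
    (r : ℕ) : ∀ w, β ^ r * ∑ u ∈ Finset.univ.filter (fun u => G.dist w u ≤ r), x u ≤ x w := by
  induction r with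
  | zero =>
    intro w
    have : Finset.univ.filter (fun u => G.dist w u ≤ 0) = {w} := by
      ext u
      simp [hG.dist_eq_zero_iff, eq_comm]
    rw [this]
    simp
  | succ r ih =>
    intro w
    refine le_trans ?_ (h w)
    rw [pow_succ', mul_assoc]
    refine mul_le_mul_of_nonneg_left ?_ hβ.le
    refine le_trans ?_ (Finset.sum_le_sum fun y _ => ih y)
    rw [← Finset.mul_sum]
    refine mul_le_mul_of_nonneg_left ?_ (pow_nonneg hβ.le _)
    refine le_trans (Finset.sum_le_sum_of_subset_of_nonneg (t := (Finset.univ.filter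
      (fun y => y = w ∨ G.Adj w y)).biUnion fun y =>
        Finset.univ.filter (fun u => G.dist y u ≤ r)) ?_ fun u _ _ => hx u) ?_
    · intro u hu
      simp only [Finset.mem_filter, Finset.mem_univ, true_and, Finset.mem_biUnion] at hu ⊢
      obtain ⟨p, hp⟩ := hG.exists_walk_length_eq_dist w u
      cases p with
      | nil => exact ⟨w, Or.inl rfl, by simp⟩
      | @cons _ y _ hadj q =>
        refine ⟨y, Or.inr hadj, (SimpleGraph.dist_le q).trans ?_⟩
        rw [SimpleGraph.Walk.length_cons] at hp
        omega
    · exact sum_biUnion_le_aux _ _ x hx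

theorem main_bound {V : Type*} [Fintype V]
    (G : SimpleGraph V) (hG : G.Connected) (v : V)
    (β : ℝ) (hroot : (indPoly G).eval β = 0) (hβ : 0 < β)
    (hpos : ∀ A, 0 ≤ (indPolyOn G A).eval β) :
    -(derivative (indPoly G)).eval β ≤
      (Fintype.card V : ℝ) * (indPolyOn G (Set.univ \ {v})).eval β / β ^ G.diam := by
  classical
  have hx : ∀ u, (indPolyOn G (Set.univ \ {u})).eval β =
      β * (indPolyOn G (Set.univ \ insert u (G.neighborSet u))).eval β := by
    intro u
    have h1 := ind_eval_rec G Set.univ u (Set.mem_univ _) β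
    rw [indPoly] at hroot
    linarith
  have hb := ball_sum G hG β hβ (fun u => (indPolyOn G (Set.univ \ {u})).eval β)
    (fun u => hpos _) (by
      intro w
      have := ind_superadd G β hroot hβ hpos
        (Finset.univ.filter (fun y => y = w ∨ G.Adj w y))
      have e : ((Finset.univ.filter (fun y => y = w ∨ G.Adj w y) : Finset V) : Set V) =
          insert w (G.neighborSet w) := by
        ext y
        simp
      rw [e] at this
      rw [hx w]
      exact mul_le_mul_of_nonneg_left this hβ.le) G.diam v
  have hne := hG.nonempty
  have e : Finset.univ.filter (fun u => G.dist v u ≤ G.diam) = Finset.univ := by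
    ext u
    simp only [Finset.mem_filter, Finset.mem_univ, true_and, iff_true]
    exact SimpleGraph.dist_le_diam (SimpleGraph.connected_iff_ediam_ne_top.1 hG)
  rw [e] at hb
  have hn := ind_card G β hroot hβ hpos
  rw [indPoly_derivative, le_div_iff₀ (pow_pos hβ _)]
  simp only [eval_neg, neg_neg, eval_finsetSum]
  have h2 : ∑ u, (indPolyOn G (Set.univ \ {u})).eval β =
      β * ∑ u, (indPolyOn G (Set.univ \ insert u (G.neighborSet u))).eval β := by
    rw [Finset.mul_sum]
    exact Finset.sum_congr rfl fun u _ => hx u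
  rw [h2] at hb
  have hs : 0 ≤ ∑ u, (indPolyOn G (Set.univ \ insert u (G.neighborSet u))).eval β :=
    Finset.sum_nonneg fun u _ => hpos _
  set s := ∑ u, (indPolyOn G (Set.univ \ insert u (G.neighborSet u))).eval β
  have hp : 0 ≤ β ^ G.diam := pow_nonneg hβ.le _
  have h3 := mul_le_mul_of_nonneg_left hb (Nat.cast_nonneg (α := ℝ) (Fintype.card V))
  have h4 := mul_le_mul_of_nonneg_right hn (mul_nonneg hs hp)
  calc s * β ^ G.diam = 1 * (s * β ^ G.diam) := by ring
    _ ≤ _ := h4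
    _ = Fintype.card V * (β ^ G.diam * (β * s)) := by ring
    _ ≤ _ := h3

/-- For a connected graph `G` on `n` vertices, a vertex `v`, and
`β := β(G)`, one has `f_v'(β) ≤ n/β^{dia(G)}`; equivalently
`−I'(G,β) ≤ n·I(G∖v,β)/β^{dia(G)}`. -/
theorem deriv_fv_at_beta_upper_bound {V : Type*} [Fintype V]
    (G : SimpleGraph V) (hG : G.Connected) (v : V)
    (β : ℝ) (hroot : (indPoly G).eval β = 0)
    (hmin : ∀ x : ℝ, (indPoly G).eval x = 0 → β ≤ x) :
    deriv (fun x : ℝ =>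
        x * (indPolyOn G (insert v (G.neighborSet v))ᶜ).eval x /
          (indPolyOn G {v}ᶜ).eval x) β ≤ (Fintype.card V : ℝ) / β ^ G.diam ∧
    -(derivative (indPoly G)).eval β ≤
      (Fintype.card V : ℝ) * (indPolyOn G {v}ᶜ).eval β / β ^ G.diam := by
  obtain ⟨hβ, hpos⟩ := ind_nonneg G β hroot hmin
  have hb := main_bound G hG v β hroot hβ hpos
  rw [Set.compl_eq_univ_sdiff, Set.compl_eq_univ_sdiff]
  refine ⟨?_, hb⟩
  have hne : (indPolyOn G (Set.univ \ {v})).eval β ≠ 0 := by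
    intro h
    have h1 := ind_pos G hG β hβ hpos _ h
    have h2 : v ∈ Set.univ \ {v} := by rw [h1]; trivial
    exact h2.2 rfl
  have hp : 0 < (indPolyOn G (Set.univ \ {v})).eval β := lt_of_le_of_ne (hpos _) hne.symm
  have hf : (fun x : ℝ => x * (indPolyOn G (Set.univ \ insert v (G.neighborSet v))).eval x /
      (indPolyOn G (Set.univ \ {v})).eval x) = fun x =>
      ((indPolyOn G (Set.univ \ {v})).eval x - (indPoly G).eval x) /
      (indPolyOn G (Set.univ \ {v})).eval x := by
    funext x
    rw [indPoly, ind_eval_rec G Set.univ v (Set.mem_univ _) x, sub_sub_cancel]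
  rw [hf]
  have hd := (((indPolyOn G (Set.univ \ {v})).hasDerivAt β).sub ((indPoly G).hasDerivAt β)).div
    ((indPolyOn G (Set.univ \ {v})).hasDerivAt β) hne
  have hd' := hd.deriv
  have : deriv (fun x => ((indPolyOn G (Set.univ \ {v})).eval x - (indPoly G).eval x) /
      (indPolyOn G (Set.univ \ {v})).eval x) β =
      -(derivative (indPoly G)).eval β / (indPolyOn G (Set.univ \ {v})).eval β := by
    refine hd'.trans ?_
    simp only [Pi.sub_apply]
    rw [hroot]
    field_simp
    ring
  rw [this, div_le_iff₀ hp]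
  refine hb.trans (le_of_eq ?_)
  ring
end
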